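/- In a d-choice allocation of n objects on n nodes with random design and i.i.d. demands, for any positive integers u_1, …, u_v with u_1 + ⋯ + u_v = n, the robustness (over both the random allocation and the random demands) satisfies P ≤ ∏_{i=1}^{v} E[ F_{u_i}(m · N_{n,d,u_i}) ], where N_{n,d,u} = |D_1 ∪ ⋯ ∪ D_u| for D_1,…,D_u independent uniformly random d-element subsets of the n nodes, and F_u is the CDF of the sum of u i.i.d. demands. -/

import Mathlib

/-!
The argument rests on splitting the `n` objects into `v` blocks of sizes `u 1, …, u v`. If a demand
vector is servable, then the total demand of every block is carried by the nodes that store some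
object of that block, each with load at most `m`, so it is at most `m` times the number of those
nodes (`Servable.sum_le`). Hence the servability event is contained in the intersection over the
blocks of the events "block demand ≤ `m` · (block coverage)". Distinct blocks involve disjoint
coordinates of both the demand vector and the allocation, so the probability of the intersection
factors: `pi_blocks` does this for the demands and `sum_piFinset_blocks` for the average over the
allocations.
-/

open MeasureTheory Finset
open scoped ENNReal

/-- A demand vector `ρ` is `m`-servable for the storage allocation `C` (object `i` is
stored on the set of nodes `C i`) if the demands can be split across service choices
so that every node carries load at most `m`. -/
def Servable {n k : ℕ} (C : Fin k → Finset (Fin n)) (m : ℝ) (ρ : Fin k → ℝ) : Prop :=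
  ∃ x : Fin k → Fin n → ℝ,
    (∀ i u, 0 ≤ x i u) ∧
    (∀ i u, u ∉ C i → x i u = 0) ∧
    (∀ i, ∑ u ∈ C i, x i u = ρ i) ∧
    (∀ u : Fin n, ∑ i ∈ univ.filter (fun i => u ∈ C i), x i u ≤ m)

/-- The capacity (Hall-type) necessary condition for servability, for the objects indexed by an
injective family `f`: their total demand is at most `m` times the number of nodes they cover. -/
lemma Servable.sum_le {n k l : ℕ} {C : Fin k → Finset (Fin n)} {m : ℝ} {ρ : Fin k → ℝ}
    (h : Servable C m ρ) (f : Fin l → Fin k) (hf : Function.Injective f) :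
    ∑ j, ρ (f j) ≤ m * (((univ : Finset (Fin l)).biUnion fun j => C (f j)).card : ℝ) := by
  obtain ⟨x, hx0, hxC, hxρ, hxm⟩ := h
  set U := (univ : Finset (Fin l)).biUnion fun j => C (f j) with hU
  calc ∑ j, ρ (f j) = ∑ j, ∑ w ∈ U, x (f j) w := by
        refine sum_congr rfl fun j _ => ?_
        rw [← hxρ (f j)]
        exact sum_subset (subset_biUnion_of_mem (fun j => C (f j)) (mem_univ j))
          fun w _ hw => hxC _ _ hw
    _ = ∑ w ∈ U, ∑ j, x (f j) w := sum_comm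
    _ ≤ ∑ w ∈ U, m := by
        refine sum_le_sum fun w _ => le_trans ?_ (hxm w)
        rw [sum_filter_of_ne (fun i _ hi => by_contra fun hw => hi (hxC i w hw)),
          ← sum_image (f := fun i => x i w) (fun a _ b _ hab => hf hab)]
        exact sum_le_sum_of_subset_of_nonneg (subset_univ _) fun i _ _ => hx0 i w
    _ = m * (U.card : ℝ) := by rw [sum_const, nsmul_eq_mul, mul_comm]

/-- Under a product measure, events that depend on disjoint blocks of coordinates are independent.
Block `i` consists of the coordinates `e ⟨i, j⟩`. -/
lemma pi_blocks {n v : ℕ} {u : Fin v → ℕ} (e : ((i : Fin v) × Fin (u i)) ≃ Fin n)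
    (μ : Measure ℝ) [IsProbabilityMeasure μ] (A : (i : Fin v) → Set (Fin (u i) → ℝ))
    (hA : ∀ i, MeasurableSet (A i)) :
    (Measure.pi fun _ : Fin n => μ) {ρ | ∀ i, (fun j => ρ (e ⟨i, j⟩)) ∈ A i} =
      ∏ i, (Measure.pi fun _ : Fin (u i) => μ) (A i) := by
  -- the product over `Fin n` is the image of the iterated product under uncurrying along `e`
  let T : ((i : Fin v) → Fin (u i) → ℝ) → Fin n → ℝ := fun f k => f (e.symm k).1 (e.symm k).2
  have hT : Measurable T := by
    refine measurable_pi_lambda _ fun k => ?_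
    exact (measurable_pi_apply (e.symm k).2).comp (measurable_pi_apply (e.symm k).1)
  have hTe : ∀ f i j, T f (e ⟨i, j⟩) = f i j := fun f i j =>
    congrArg (fun p : (i : Fin v) × Fin (u i) => f p.1 p.2) (e.symm_apply_apply ⟨i, j⟩)
  have hmap : (Measure.pi fun _ : Fin n => μ) =
      (Measure.pi fun i : Fin v => Measure.pi fun _ : Fin (u i) => μ).map T := by
    refine Measure.pi_eq fun s hs => ?_
    have hpre : T ⁻¹' Set.univ.pi s =
        Set.univ.pi fun i => Set.univ.pi fun j => s (e ⟨i, j⟩) := by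
      ext f
      simp only [Set.mem_preimage, Set.mem_univ_pi]
      constructor
      · intro h i j
        rw [← hTe f i j]
        exact h _
      · intro h k
        obtain ⟨⟨i, j⟩, rfl⟩ := e.surjective k
        rw [hTe]
        exact h i j
    rw [Measure.map_apply hT (MeasurableSet.univ_pi hs), hpre, Measure.pi_pi]
    simp only [Measure.pi_pi]
    rw [← e.prod_comp, Fintype.prod_sigma]
  have hset : MeasurableSet {ρ : Fin n → ℝ | ∀ i, (fun j => ρ (e ⟨i, j⟩)) ∈ A i} := by
    rw [Set.ofPred_forall]
    refine MeasurableSet.iInter fun i => ?_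
    exact (measurable_pi_lambda _ fun j => measurable_pi_apply (e ⟨i, j⟩)) (hA i)
  rw [hmap, Measure.map_apply hT hset, ← Measure.pi_pi]
  congr 1
  ext f
  simp only [Set.mem_preimage, Set.mem_ofPred_eq, Set.mem_univ_pi, hTe]

/-- The counting analogue of `pi_blocks`: a sum over all functions on `Fin n` of a product of
functions of the individual blocks factors into a product of sums. -/
lemma sum_piFinset_blocks {α : Type*} {n v : ℕ} {u : Fin v → ℕ}
    (e : ((i : Fin v) × Fin (u i)) ≃ Fin n) (S : Finset α)
    (g : (i : Fin v) → (Fin (u i) → α) → ℝ≥0∞) :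
    ∑ C ∈ Fintype.piFinset (fun _ : Fin n => S), ∏ i, g i (fun j => C (e ⟨i, j⟩)) =
      ∏ i, ∑ D ∈ Fintype.piFinset (fun _ : Fin (u i) => S), g i D := by
  rw [prod_univ_sum]
  refine sum_nbij' (fun C i j => C (e ⟨i, j⟩)) (fun f k => f (e.symm k).1 (e.symm k).2)
    ?_ ?_ ?_ ?_ ?_
  · intro C hC
    simp only [Fintype.mem_piFinset] at hC ⊢
    exact fun i j => hC _
  · intro f hf
    simp only [Fintype.mem_piFinset] at hf ⊢
    exact fun k => hf _ _
  · intro C _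
    funext k
    simp
  · intro f _
    funext i j
    exact congrArg (fun p : (i : Fin v) × Fin (u i) => f p.1 p.2) (e.symm_apply_apply ⟨i, j⟩)
  · intro C _
    rfl

/-- Random-design upper bound. The robustness over both the random allocation (each of the
`n` service-choice sets drawn uniformly among `d`-subsets of the `n` nodes, written as an
average over all such allocations) and the i.i.d. demands is at most
`∏_{i=1}^{v} E[F_{u_i}(m · N_{n,d,u_i})]`, for any positive `u_1, …, u_v` summing to `n`.
Here `N_{n,d,u} = |D_1 ∪ ⋯ ∪ D_u|` for independent uniform `d`-subsets `D_1, …, D_u`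
(the occupancy of random allocation with `d`-complexes), and each expectation is written
as an average over all `u_i`-tuples of `d`-subsets. -/
theorem stmt18 (n d : ℕ) (hn : 0 < n) (hd : 1 ≤ d) (hdn : d ≤ n)
    (m : ℝ) (hm0 : 0 < m) (hm1 : m ≤ 1)
    (μ : Measure ℝ) [IsProbabilityMeasure μ] (hμ : μ (Set.Iio 0) = 0)
    (v : ℕ) (u : Fin v → ℕ) (hu : ∀ i, 0 < u i) (husum : ∑ i, u i = n) :
    (∑ C ∈ Fintype.piFinset (fun _ : Fin n => (univ : Finset (Fin n)).powersetCard d),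
        (Measure.pi fun _ : Fin n => μ) {ρ | Servable C m ρ}) /
        ((n.choose d : ℝ≥0∞) ^ n) ≤
      ∏ i : Fin v,
        (∑ D ∈ Fintype.piFinset (fun _ : Fin (u i) => (univ : Finset (Fin n)).powersetCard d),
            (Measure.pi fun _ : Fin (u i) => μ)
              {w | ∑ j, w j ≤ m * (((univ : Finset (Fin (u i))).biUnion D).card : ℝ)}) /
          ((n.choose d : ℝ≥0∞) ^ (u i)) := by
  let e : ((i : Fin v) × Fin (u i)) ≃ Fin n := finSigmaFinEquiv.trans (finCongr husum)
  rw [ENNReal.prod_div_distrib_of_ne_top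
    (fun i _ => ENNReal.pow_ne_top (ENNReal.natCast_ne_top _)), prod_pow_eq_pow_sum, husum,
    ← sum_piFinset_blocks e _ (fun i D => (Measure.pi fun _ : Fin (u i) => μ)
      {w | ∑ j, w j ≤ m * (((univ : Finset (Fin (u i))).biUnion D).card : ℝ)})]
  refine ENNReal.div_le_div_right (sum_le_sum fun C _ => ?_) _
  rw [← pi_blocks e μ (fun i => {w | ∑ j, w j ≤
      m * (((univ : Finset (Fin (u i))).biUnion fun j => C (e ⟨i, j⟩)).card : ℝ)})
    (fun i => measurableSet_le (by fun_prop) measurable_const)]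
  refine measure_mono fun ρ hρ i => ?_
  exact Servable.sum_le hρ (fun j => e ⟨i, j⟩)
    fun a b hab => eq_of_heq (Sigma.mk.inj (e.injective hab)).2
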